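/- Let (G, μ₁, U) and (H, μ₂, V) be fuzzy subgroups with cover monoids C₁ = C(G,μ₁,U) and C₂ = C(H,μ₂,V), first-coordinate projections φ₁, φ₂, and let λ : U → V be an order-preserving map with λ(μ₁(1)) = μ₂(1). Suppose g : C₁ → C₂ is a monoid homomorphism such that φ₂∘g = λ∘φ₁ and g maps the greatest element of each σ-class of C₁ to the greatest element of some σ-class of C₂, i.e. for every x ∈ G there is x' ∈ H with g(μ₁(x), x) = (μ₂(x'), x'). Then there exists a group homomorphism f : G → H such that μ₂∘f = λ∘μ₁ and g(u,x) = (λ(u), f(x)) for all (u,x) ∈ C₁. (Fullness of the embedding Ω.) -/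

import Mathlib

/-- `(G, μ, U)` is a fuzzy subgroup: `U ⊆ [0,1]`, `μ : G → U` surjective,
`μ(xy) ≥ min (μ x) (μ y)` and `μ x⁻¹ = μ x`. -/
def IsFuzzySubgroup {G : Type*} [Group G] (μ : G → ℝ) (U : Set ℝ) : Prop :=
  U ⊆ Set.Icc (0 : ℝ) 1 ∧ (∀ x, μ x ∈ U) ∧ (∀ u ∈ U, ∃ x, μ x = u) ∧
    (∀ x y, min (μ x) (μ y) ≤ μ (x * y)) ∧ (∀ x, μ x⁻¹ = μ x)

/-- Membership in the cover monoid `C(G,μ,U) = {(u,x) ∈ U × G : u ≤ μ x}`. -/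
def inCover {G : Type*} [Group G] (μ : G → ℝ) (U : Set ℝ) (p : ℝ × G) : Prop :=
  p.1 ∈ U ∧ p.1 ≤ μ p.2

/-- The multiplication `(u,x)(v,y) = (min u v, xy)` of the cover monoid. -/
def cmul {M : Type*} [Mul M] (p q : ℝ × M) : ℝ × M :=
  (min p.1 q.1, p.2 * q.2)

/-!
Composing `g` with the second projection gives a multiplicative map `C(G,μ₁,U) → H`. It sends each
`(u, 1)` to an idempotent of `H`, which is `1` by cancellation. Since `(u, x) = (u, 1)(μ₁ x, x)`
whenever `u ≤ μ₁ x`, it is constant on `σ`-classes, and so factors through a homomorphism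
`f : G → H`. The first coordinate of the greatest element of a `σ`-class then gives
`μ₂ ∘ f = λ ∘ μ₁`.
-/

namespace IsFuzzySubgroup

variable {G : Type*} [Group G] {μ : G → ℝ} {U : Set ℝ}

theorem le_map_one (h : IsFuzzySubgroup μ U) {u : ℝ} (hu : u ∈ U) : u ≤ μ 1 := by
  obtain ⟨-, -, hsurj, hmul, hinv⟩ := h
  obtain ⟨x, rfl⟩ := hsurj u hu
  calc μ x = min (μ x) (μ x⁻¹) := by rw [hinv, min_self]
    _ ≤ μ (x * x⁻¹) := hmul x x⁻¹
    _ = μ 1 := by rw [mul_inv_cancel]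

theorem inCover_one (h : IsFuzzySubgroup μ U) {u : ℝ} (hu : u ∈ U) : inCover μ U (u, 1) :=
  ⟨hu, h.le_map_one hu⟩

theorem inCover_map (h : IsFuzzySubgroup μ U) (x : G) : inCover μ U (μ x, x) :=
  ⟨h.2.1 x, le_rfl⟩

theorem inCover_cmul (h : IsFuzzySubgroup μ U) {p q : ℝ × G} (hp : inCover μ U p)
    (hq : inCover μ U q) : inCover μ U (cmul p q) := by
  obtain ⟨-, -, -, hmul, -⟩ := h
  exact ⟨min_rec' (· ∈ U) hp.1 hq.1, (min_le_min hp.2 hq.2).trans (hmul p.2 q.2)⟩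

end IsFuzzySubgroup

/-- `k` restricts to a multiplicative map from the cover monoid `C(G,μ,U)` to `M`. As the cover
monoid is given by the predicate `inCover`, `k` is defined on all of `ℝ × G`, and its values
outside the cover monoid are unconstrained. -/
def IsMulOnCover {G M : Type*} [Group G] [Mul M] (μ : G → ℝ) (U : Set ℝ) (k : ℝ × G → M) : Prop :=
  ∀ p q, inCover μ U p → inCover μ U q → k (cmul p q) = k p * k q

namespace IsMulOnCover

variable {G M : Type*} [Group G] [Monoid M] [IsLeftCancelMul M]
  {μ : G → ℝ} {U : Set ℝ} {k : ℝ × G → M}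

theorem apply_mk_one (hk : IsMulOnCover μ U k) (h : IsFuzzySubgroup μ U) {u : ℝ} (hu : u ∈ U) :
    k (u, 1) = 1 := by
  have hidem : k (u, 1) * k (u, 1) = k (u, 1) := by
    rw [← hk _ _ (h.inCover_one hu) (h.inCover_one hu), cmul, min_self, mul_one]
  exact mul_eq_left.mp hidem

theorem apply_eq_apply_map (hk : IsMulOnCover μ U k) (h : IsFuzzySubgroup μ U) {u : ℝ} {x : G}
    (hux : inCover μ U (u, x)) : k (u, x) = k (μ x, x) := by
  have hfactor : cmul (u, 1) (μ x, x) = (u, x) := by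
    rw [cmul, min_eq_left hux.2, one_mul]
  rw [← hfactor, hk _ _ (h.inCover_one hux.1) (h.inCover_map x), hk.apply_mk_one h hux.1, one_mul]

/-- The homomorphism `G →* M` through which a multiplicative map `k` on the cover monoid factors;
its value at `x` is the value of `k` at the greatest element of the `σ`-class of `x`. -/
def inducedHom (hk : IsMulOnCover μ U k) (h : IsFuzzySubgroup μ U) : G →* M where
  toFun x := k (μ x, x)
  map_one' := hk.apply_mk_one h (h.inCover_map 1).1
  map_mul' x y := by
    have hxy := h.inCover_cmul (h.inCover_map x) (h.inCover_map y)
    rw [← hk.apply_eq_apply_map h hxy]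
    exact hk _ _ (h.inCover_map x) (h.inCover_map y)

theorem inducedHom_apply (hk : IsMulOnCover μ U k) (h : IsFuzzySubgroup μ U) {p : ℝ × G}
    (hp : inCover μ U p) : hk.inducedHom h p.2 = k p :=
  (hk.apply_eq_apply_map h hp).symm

end IsMulOnCover

theorem stmt18_general {G H : Type*} [Group G] [Monoid H] [IsLeftCancelMul H]
    (μ₁ : G → ℝ) (U : Set ℝ) (μ₂ : H → ℝ) (h₁ : IsFuzzySubgroup μ₁ U) (l : ℝ → ℝ)
    (g : ℝ × G → ℝ × H)
    (hghom : ∀ p q : ℝ × G, inCover μ₁ U p → inCover μ₁ U q →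
      g (cmul p q) = cmul (g p) (g q))
    (hgφ : ∀ p : ℝ × G, inCover μ₁ U p → (g p).1 = l p.1)
    (hgmax : ∀ x : G, ∃ x' : H, g (μ₁ x, x) = (μ₂ x', x')) :
    ∃ f : G →* H, (∀ x : G, μ₂ (f x) = l (μ₁ x)) ∧
      (∀ p : ℝ × G, inCover μ₁ U p → g p = (l p.1, f p.2)) := by
  have hsnd : IsMulOnCover μ₁ U fun p ↦ (g p).2 :=
    fun p q hp hq ↦ congrArg Prod.snd (hghom p q hp hq)
  have hg : ∀ p, inCover μ₁ U p → g p = (l p.1, hsnd.inducedHom h₁ p.2) :=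
    fun p hp ↦ Prod.ext (hgφ p hp) (hsnd.inducedHom_apply h₁ hp).symm
  refine ⟨hsnd.inducedHom h₁, fun x ↦ ?_, hg⟩
  obtain ⟨x', hx'⟩ := hgmax x
  obtain ⟨hl, hf⟩ := Prod.ext_iff.mp ((hg _ (h₁.inCover_map x)).symm.trans hx')
  exact (congrArg μ₂ hf).trans hl.symm

/-- Fullness of the embedding `Ω`: every morphism of cover monoids compatible with
the projections and preserving greatest `σ`-class elements is induced by a group
homomorphism `f : G → H` with `μ₂ ∘ f = λ ∘ μ₁`. -/
theorem stmt18 {G H : Type*} [Group G] [Group H]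
    (μ₁ : G → ℝ) (U : Set ℝ) (μ₂ : H → ℝ) (V : Set ℝ)
    (h₁ : IsFuzzySubgroup μ₁ U) (h₂ : IsFuzzySubgroup μ₂ V)
    (l : ℝ → ℝ)
    (hlmap : ∀ u ∈ U, l u ∈ V)
    (hlmono : ∀ u ∈ U, ∀ v ∈ U, u ≤ v → l u ≤ l v)
    (hl1 : l (μ₁ (1 : G)) = μ₂ (1 : H))
    (g : ℝ × G → ℝ × H)
    (hgC : ∀ p : ℝ × G, inCover μ₁ U p → inCover μ₂ V (g p))
    (hghom : ∀ p q : ℝ × G, inCover μ₁ U p → inCover μ₁ U q →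
      g (cmul p q) = cmul (g p) (g q))
    (hg1 : g (μ₁ (1 : G), (1 : G)) = (μ₂ (1 : H), (1 : H)))
    (hgφ : ∀ p : ℝ × G, inCover μ₁ U p → (g p).1 = l p.1)
    (hgmax : ∀ x : G, ∃ x' : H, g (μ₁ x, x) = (μ₂ x', x')) :
    ∃ f : G → H, f 1 = 1 ∧ (∀ x y : G, f (x * y) = f x * f y) ∧
      (∀ x : G, μ₂ (f x) = l (μ₁ x)) ∧
      (∀ p : ℝ × G, inCover μ₁ U p → g p = (l p.1, f p.2)) := by
  obtain ⟨f, hfμ, hfg⟩ := stmt18_general μ₁ U μ₂ h₁ l g hghom hgφ hgmax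
  exact ⟨f, map_one f, map_mul f, hfμ, hfg⟩
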